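/- arXiv:2310.09491 — 2 statements merged into one kernel-verified Lean document; each statement's English description precedes it below -/
import Mathlib

section
/- Let (R, m, 𝔽_q) be a finite commutative local ring with residue field of q elements, u ≥ 0 and n ≥ 1 integers, and G a finite R-module with Betti numbers b_i = β_i^R(G) satisfying n ≥ b₀ ≥ b₁ − u. Then the number of n × (n+u) matrices X over R with cok(X) ≅ G equals |R|^{n(n+u)} · (1 / (|Aut_R(G)| · |G|^u)) · ∏_{i=u+b₀−b₁+1}^{n+u} (1 − q^{−i}) · ∏_{j=n−b₀+1}^{n} (1 − q^{−j}). -/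
/-- The minimal number of generators of a module; over a local ring this is the zeroth
Betti number `β₀(G) = dim_κ(G/mG)` of a minimal free resolution. -/
noncomputable def minGens (R M : Type*) [Semiring R] [AddCommMonoid M] [Module R M] : ℕ :=
  sInf {k | ∃ s : Finset M, s.card = k ∧ Submodule.span R (s : Set M) = ⊤}

/-- The first Betti number of a module over a local ring: the minimal number of
generators of the kernel of a (minimal) surjection `R^{β₀(G)} → G`. -/
noncomputable def beta1 (R M : Type*) [CommRing R] [AddCommGroup M] [Module R M] : ℕ :=
  sInf {k | ∃ F : (Fin (minGens R M) → R) →ₗ[R] M,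
    Function.Surjective F ∧ minGens R (LinearMap.ker F) = k}

/-!
Put `N = n + u` and count the pairs `(X, F)` where `X` is an `n × N` matrix and `F : R^n → G` is a
surjection with `ker F = im X`. For a fixed `X` with `cok X ≅ G` the possible `F` are the
isomorphisms `cok X ≃ G`, so there are `|Aut G|` of them (`card_pairs`). For a fixed `F` the
possible `X` are the generating `N`-tuples of `ker F` (`matrixRangeEquiv`), and the surjections `F`
are themselves the generating `n`-tuples of `G` (`surjectionsEquiv`).

Generating tuples are counted by `card_generating`: a finite module `M` with `d ≤ N` minimal
generators has `|M|^N ∏_{i < d} (1 - q^{i - N})` generating `N`-tuples. By Nakayama's lemma, a tuple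
generates `M` exactly when its reduction spans `κ ⊗ M`; spanning `N`-tuples of `κ^d` are the
`d × N` matrices of rank `d`, that is, independent `d`-tuples of `κ^N`.

It remains to know that `ker F` has `n - b₀ + b₁` minimal generators, whatever the surjection
`F : R^n → G` is (`minGens_ker`). This follows from Schanuel's lemma, since the minimal number of
generators is the dimension of the residue fibre `κ ⊗ M` and hence additive on products. The
condition `b₁ ≤ b₀ + u` says that this number is at most `N`.
-/

open scoped TensorProduct Matrix

/-! ### Minimal numbers of generators over a local ring -/

section Generators

variable {R : Type*} [CommRing R]

lemma minGens_eq_spanFinrank (M : Type*) [AddCommGroup M] [Module R M] [Module.Finite R M] :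
    minGens R M = (⊤ : Submodule R M).spanFinrank := by
  classical
  obtain ⟨s, hs, hs'⟩ :=
    (Module.Finite.fg_top (R := R) (M := M)).exists_span_finset_card_eq_spanFinrank
  apply le_antisymm
  · exact Nat.sInf_le ⟨s, hs, hs'⟩
  · obtain ⟨t, ht, ht'⟩ : minGens R M ∈
        {k | ∃ s : Finset M, s.card = k ∧ Submodule.span R (s : Set M) = ⊤} :=
      Nat.sInf_mem ⟨_, s, hs, hs'⟩
    have h := Submodule.spanFinrank_span_le_ncard_of_finite (R := R) t.finite_toSet
    rwa [ht', Set.ncard_coe_finset, ht] at h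

variable [IsLocalRing R]

lemma minGens_eq_finrank (M : Type*) [AddCommGroup M] [Module R M] [Module.Finite R M] :
    minGens R M = Module.finrank (IsLocalRing.ResidueField R)
      (IsLocalRing.ResidueField R ⊗[R] M) := by
  rw [minGens_eq_spanFinrank,
    ← TensorProduct.spanFinrank_top_eq_of_residueField _ Module.Finite.fg_top,
    ← Module.finrank_eq_spanFinrank_of_free]
  exact (Submodule.topEquiv (R := R) (M := M)).baseChange R
    (IsLocalRing.ResidueField R) _ _ |>.finrank_eq

lemma minGens_congr {M M' : Type*} [AddCommGroup M] [Module R M] [Module.Finite R M]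
    [AddCommGroup M'] [Module R M'] [Module.Finite R M'] (e : M ≃ₗ[R] M') :
    minGens R M = minGens R M' := by
  rw [minGens_eq_finrank, minGens_eq_finrank]
  exact (e.baseChange R (IsLocalRing.ResidueField R) _ _).finrank_eq

lemma minGens_prod (M M' : Type*) [AddCommGroup M] [Module R M] [Module.Finite R M]
    [AddCommGroup M'] [Module R M'] [Module.Finite R M'] :
    minGens R (M × M') = minGens R M + minGens R M' := by
  rw [minGens_eq_finrank, minGens_eq_finrank, minGens_eq_finrank, ← Module.finrank_prod]
  exact (TensorProduct.prodRight R (IsLocalRing.ResidueField R) _ _ _).finrank_eq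

lemma minGens_pi (n : ℕ) : minGens R (Fin n → R) = n := by
  rw [minGens_eq_finrank, Module.finrank_baseChange, Module.finrank_fin_fun]

end Generators

/-! ### Schanuel's lemma and the first Betti number -/

section Schanuel

/-- Schanuel's lemma in explicit form: `α` and `β` lift `f` and `g` through one another, and both
sides are identified with the fibre product `P ×_G Q`. -/
def schanuelEquiv {R P Q G : Type*} [CommRing R] [AddCommGroup P] [Module R P]
    [AddCommGroup Q] [Module R Q] [AddCommGroup G] [Module R G]
    (f : P →ₗ[R] G) (g : Q →ₗ[R] G) (α : P →ₗ[R] Q) (β : Q →ₗ[R] P)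
    (hα : ∀ x, g (α x) = f x) (hβ : ∀ y, f (β y) = g y) :
    (LinearMap.ker f × Q) ≃ₗ[R] (LinearMap.ker g × P) where
  toFun z := (⟨z.2 - α (z.1 + β z.2), by simp [hα, hβ]⟩, z.1 + β z.2)
  invFun w := (⟨w.2 - β (w.1 + α w.2), by simp [hα, hβ]⟩, w.1 + α w.2)
  map_add' z w := by
    ext <;> simp <;> abel
  map_smul' c z := by
    ext <;> simp [smul_sub]
  left_inv z := by
    ext <;> simp
  right_inv w := by
    ext <;> simp

variable {R : Type*} [CommRing R] [IsLocalRing R] [Finite R]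
  {G : Type*} [AddCommGroup G] [Module R G]

/-- By Schanuel's lemma, `β₀` of the kernel of a surjection `R^a → G` depends on `a` only. -/
lemma minGens_ker_add {a b : ℕ} (f : (Fin a → R) →ₗ[R] G) (g : (Fin b → R) →ₗ[R] G)
    (hf : Function.Surjective f) (hg : Function.Surjective g) :
    minGens R (LinearMap.ker f) + b = minGens R (LinearMap.ker g) + a := by
  obtain ⟨α, hα⟩ := Module.projective_lifting_property g f hg
  obtain ⟨β, hβ⟩ := Module.projective_lifting_property f g hf
  have h := minGens_congr (schanuelEquiv f g α β (LinearMap.congr_fun hα) (LinearMap.congr_fun hβ))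
  rwa [minGens_prod, minGens_prod, minGens_pi, minGens_pi] at h

variable [Finite G]

omit [IsLocalRing R] [Finite R] in
lemma exists_surjective_minGens :
    ∃ F : (Fin (minGens R G) → R) →ₗ[R] G, Function.Surjective F := by
  classical
  obtain ⟨s, hs, hs'⟩ : minGens R G ∈
      {k | ∃ s : Finset G, s.card = k ∧ Submodule.span R (s : Set G) = ⊤} := by
    have := Fintype.ofFinite G
    exact Nat.sInf_mem ⟨_, Finset.univ, rfl, by simp⟩
  let e : Fin (minGens R G) ≃ s := (s.equivFinOfCardEq hs).symm
  refine ⟨Fintype.linearCombination R (fun i => (e i : G)), ?_⟩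
  rw [← LinearMap.range_eq_top, Fintype.range_linearCombination, ← hs']
  congr 1
  rw [show (fun i => (e i : G)) = Subtype.val ∘ e from rfl, e.surjective.range_comp]
  simp

/-- The number of generators of the kernel of any surjection `R^n → G`. -/
lemma minGens_ker {n : ℕ} (f : (Fin n → R) →ₗ[R] G) (hf : Function.Surjective f) :
    minGens R (LinearMap.ker f) + minGens R G = beta1 R G + n := by
  obtain ⟨F, hF⟩ := exists_surjective_minGens (R := R) (G := G)
  obtain ⟨F', hF', h⟩ : beta1 R G ∈ {k | ∃ F : (Fin (minGens R G) → R) →ₗ[R] G,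
      Function.Surjective F ∧ minGens R (LinearMap.ker F) = k} :=
    Nat.sInf_mem ⟨_, F, hF, rfl⟩
  rw [← h]
  exact minGens_ker_add f F' hf hF'

end Schanuel

/-! ### Counting generating tuples -/

section Counting

/-- All fibres of a surjective homomorphism of finite groups have the same size. -/
lemma card_preimage_mul {A B : Type*} [AddGroup A] [AddGroup B] [Finite A]
    (f : A →+ B) (hf : Function.Surjective f) (S : Set B) :
    Nat.card (f ⁻¹' S) * Nat.card B = Nat.card S * Nat.card A := by
  have : Finite B := Finite.of_surjective f hf
  have key : ∀ T : Set B, Nat.card (f ⁻¹' T) = Nat.card T * Nat.card f.ker := by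
    intro T
    rw [← Nat.card_prod]
    refine Nat.card_congr ((Equiv.sigmaFiberEquiv
      (fun x : f ⁻¹' T => (⟨f x, x.2⟩ : T))).symm.trans (Equiv.trans
        (Equiv.sigmaCongrRight fun t => ?_) (Equiv.sigmaEquivProd T f.ker)))
    refine Equiv.trans ?_ (AddMonoidHom.fiberEquivKerOfSurjective hf (t : B))
    exact
      { toFun := fun x => ⟨x.1.1, congrArg Subtype.val x.2⟩
        invFun := fun x => ⟨⟨x.1, by
          have h : f x.1 = t := x.2
          simp [h]⟩, Subtype.ext x.2⟩
        left_inv := fun _ => rfl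
        right_inv := fun _ => rfl }
  have h1 := key Set.univ
  rw [Set.preimage_univ, Nat.card_univ, Nat.card_univ] at h1
  rw [key, h1]
  ring

/-- Transposing turns spanning `N`-tuples of `K^d` into independent `d`-tuples of `K^N`. -/
lemma card_spanning_pi (K : Type*) [Field K] [Finite K] (N d : ℕ) (h : d ≤ N) :
    Nat.card {v : Fin N → (Fin d → K) // Submodule.span K (Set.range v) = ⊤} =
      ∏ i : Fin d, (Nat.card K ^ N - Nat.card K ^ i.val) := by
  have := Fintype.ofFinite K
  have hc := card_linearIndependent (K := K) (V := Fin N → K) (k := d) (by simpa using h)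
  rw [Module.finrank_fin_fun, ← Nat.card_eq_fintype_card] at hc
  rw [← hc]
  refine Nat.card_congr ((Equiv.piComm _).subtypeEquiv fun v => ?_)
  have h1 : (Matrix.of v).rank = Module.finrank K (Submodule.span K (Set.range v)) :=
    Matrix.rank_eq_finrank_span_row (Matrix.of v)
  have h2 : (Matrix.of v)ᵀ.rank =
      Module.finrank K (Submodule.span K (Set.range fun i j => v j i)) :=
    Matrix.rank_eq_finrank_span_row (Matrix.of v)ᵀ
  rw [Matrix.rank_transpose] at h2
  change _ ↔ LinearIndependent K (fun i j => v j i)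
  rw [linearIndependent_iff_card_eq_finrank_span, Set.finrank, ← h2, h1, Fintype.card_fin]
  constructor
  · intro h; rw [h, finrank_top, Module.finrank_fin_fun]
  · intro h; apply Submodule.eq_top_of_finrank_eq; rw [← h, Module.finrank_fin_fun]

lemma card_spanning (K V : Type*) [Field K] [Finite K] [AddCommGroup V] [Module K V]
    [Module.Finite K V] (N : ℕ) (h : Module.finrank K V ≤ N) :
    Nat.card {v : Fin N → V // Submodule.span K (Set.range v) = ⊤} =
      ∏ i : Fin (Module.finrank K V), (Nat.card K ^ N - Nat.card K ^ i.val) := by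
  rw [← card_spanning_pi K N _ h]
  let e : V ≃ₗ[K] (Fin (Module.finrank K V) → K) := (Module.finBasis K V).equivFun
  refine Nat.card_congr ((Equiv.piCongrRight fun _ => e.toEquiv).subtypeEquiv fun v => ?_)
  have : Set.range (Equiv.piCongrRight (fun _ => e.toEquiv) v) = e '' Set.range v := by
    rw [← Set.range_comp]; rfl
  rw [this, ← LinearEquiv.coe_coe, Submodule.span_image]
  exact (map_eq_top_iff (Submodule.orderIsoMapComap e)).symm

variable {R : Type*} [CommRing R] [IsLocalRing R] [Finite R]

/-- By Nakayama's lemma a tuple generates `M` if and only if its reduction spans the residue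
fibre `κ ⊗ M`, and all fibres of the reduction have the same size. -/
lemma card_generating (M : Type*) [AddCommGroup M] [Module R M] [Finite M] (N : ℕ)
    (h : minGens R M ≤ N) :
    (Nat.card {v : Fin N → M // Submodule.span R (Set.range v) = ⊤} : ℚ) =
      (Nat.card M : ℚ) ^ N * ∏ i ∈ Finset.range (minGens R M),
        (1 - (Nat.card (IsLocalRing.ResidueField R) : ℚ) ^ i /
          (Nat.card (IsLocalRing.ResidueField R) : ℚ) ^ N) := by
  set κ := IsLocalRing.ResidueField R with hκ
  have hκf : Finite κ := Finite.of_surjective _ IsLocalRing.residue_surjective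
  have hq : 1 < Nat.card κ := Finite.one_lt_card
  set q := Nat.card κ with hqdef
  have hq0 : (q : ℚ) ≠ 0 := by positivity
  set d := minGens R M with hd
  have hd' : d = Module.finrank κ (κ ⊗[R] M) := minGens_eq_finrank M
  have hsp := card_spanning κ (κ ⊗[R] M) N (hd' ▸ h)
  rw [← hd'] at hsp
  let T : M →ₗ[R] κ ⊗[R] M := TensorProduct.mk R κ M 1
  have hT : Function.Surjective T := TensorProduct.mk_surjective R M κ IsLocalRing.residue_surjective
  let f : (Fin N → M) →+ (Fin N → κ ⊗[R] M) := T.toAddMonoidHom.compLeft (Fin N)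
  have hf : Function.Surjective f := fun w => by
    choose v hv using fun i => hT (w i)
    exact ⟨v, funext hv⟩
  have hpre : f ⁻¹' {w | Submodule.span κ (Set.range w) = ⊤} =
      {v : Fin N → M | Submodule.span R (Set.range v) = ⊤} := by
    ext v
    have hr : Set.range (f v) = T '' Set.range v := by
      rw [← Set.range_comp]; rfl
    rw [Set.mem_preimage, Set.mem_ofPred_eq, Set.mem_ofPred_eq,
      ← IsLocalRing.map_tensorProduct_mk_eq_top (R := R) (M := M), hr,
      ← Submodule.restrictScalars_eq_top_iff R,
      Submodule.restrictScalars_span R κ IsLocalRing.residue_surjective, ← Submodule.map_span]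
  have hcard := card_preimage_mul f hf {w | Submodule.span κ (Set.range w) = ⊤}
  rw [hpre] at hcard
  have hV : Nat.card (κ ⊗[R] M) = q ^ d := by
    rw [hd', Module.natCard_eq_pow_finrank (K := κ)]
  rw [Nat.card_pi, Nat.card_pi] at hcard
  simp only [Finset.prod_const, Finset.card_univ, Fintype.card_fin, hV] at hcard
  change _ = Nat.card {w : Fin N → κ ⊗[R] M // Submodule.span κ (Set.range w) = ⊤} * _ at hcard
  rw [hsp] at hcard
  change Nat.card {v : Fin N → M // Submodule.span R (Set.range v) = ⊤} * _ = _ at hcard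
  have hcast : ((∏ i : Fin d, (q ^ N - q ^ i.val) : ℕ) : ℚ) =
      ((q : ℚ) ^ d) ^ N * ∏ i ∈ Finset.range d, (1 - (q : ℚ) ^ i / (q : ℚ) ^ N) := by
    have hpow : ((q : ℚ) ^ d) ^ N = ∏ _i ∈ Finset.range d, (q : ℚ) ^ N := by
      rw [Finset.prod_const, Finset.card_range, ← pow_mul, ← pow_mul, mul_comm]
    rw [Fin.prod_univ_eq_prod_range (fun i => q ^ N - q ^ i), Nat.cast_prod, hpow,
      ← Finset.prod_mul_distrib]
    refine Finset.prod_congr rfl fun i hi => ?_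
    have hi' : i ≤ N := (Finset.mem_range.1 hi).le.trans h
    rw [Nat.cast_sub (Nat.pow_le_pow_right hq.le hi')]
    push_cast
    field_simp
  have hcard' := congrArg (Nat.cast : ℕ → ℚ) hcard
  rw [Nat.cast_mul, Nat.cast_mul, hcast] at hcard'
  push_cast at hcard'
  have hne : (((q : ℚ) ^ d) ^ N) ≠ 0 := by positivity
  apply mul_right_cancel₀ hne
  rw [hcard']
  ring

end Counting

/-! ### Pairs of a matrix and a surjection onto its cokernel -/

section Fibres

variable {R : Type*} [CommRing R] {G : Type*} [AddCommGroup G] [Module R G]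

/-- A linear map `R^n → G` is surjective if and only if the images of the standard basis vectors
generate `G`. -/
noncomputable def surjectionsEquiv (n : ℕ) :
    {F : (Fin n → R) →ₗ[R] G // Function.Surjective F} ≃
      {v : Fin n → G // Submodule.span R (Set.range v) = ⊤} :=
  ((Pi.basisFun R (Fin n)).constr ℕ).symm.toEquiv.subtypeEquiv fun F => by
    conv_lhs => rw [← LinearMap.range_eq_top,
      ← ((Pi.basisFun R (Fin n)).constr ℕ).apply_symm_apply F, Module.Basis.constr_range]
    rfl

/-- A matrix whose image is the submodule `K` is a generating tuple (of columns) of `K`. -/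
def matrixRangeEquiv (n N : ℕ) (K : Submodule R (Fin n → R)) :
    {X : Matrix (Fin n) (Fin N) R // LinearMap.range X.mulVecLin = K} ≃
      {v : Fin N → K // Submodule.span R (Set.range v) = ⊤} where
  toFun X := ⟨fun j => ⟨X.1.col j, by
      have h := X.2
      rw [Matrix.range_mulVecLin] at h
      exact h.le (Submodule.subset_span ⟨j, rfl⟩)⟩, by
    apply Submodule.map_injective_of_injective K.injective_subtype
    rw [Submodule.map_span, ← Set.range_comp, Submodule.map_top, Submodule.range_subtype]
    exact (Matrix.range_mulVecLin _).symm.trans X.2⟩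
  invFun v := ⟨Matrix.of fun i j => (v.1 j : Fin n → R) i, by
    have h := congrArg (Submodule.map K.subtype) v.2
    rw [Submodule.map_span, ← Set.range_comp, Submodule.map_top, Submodule.range_subtype] at h
    rw [Matrix.range_mulVecLin]
    exact h⟩
  left_inv _ := rfl
  right_inv _ := rfl

/-- Surjections `M → G` with kernel `K` are the isomorphisms `M / K ≃ G`. -/
noncomputable def surjectionsKerEquiv {M : Type*} [AddCommGroup M] [Module R M]
    (K : Submodule R M) :
    {F : M →ₗ[R] G // Function.Surjective F ∧ LinearMap.ker F = K} ≃ ((M ⧸ K) ≃ₗ[R] G) where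
  toFun F := (Submodule.quotEquivOfEq _ _ F.2.2.symm).trans
    (LinearMap.quotKerEquivOfSurjective F.1 F.2.1)
  invFun e := ⟨e.toLinearMap ∘ₗ K.mkQ, e.surjective.comp K.mkQ_surjective, by
    rw [LinearEquiv.ker_comp, Submodule.ker_mkQ]⟩
  left_inv F := by
    ext x; rfl
  right_inv e := by
    ext x
    obtain ⟨x, rfl⟩ := K.mkQ_surjective x
    rfl

/-- Pairs `(X, F)`, with `F` a surjection `R^n → G` whose kernel is the image of `X`. -/
def pairsEquiv (n N : ℕ) :
    (Σ X : {X : Matrix (Fin n) (Fin N) R //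
        Nonempty (((Fin n → R) ⧸ LinearMap.range X.mulVecLin) ≃ₗ[R] G)},
      {F : (Fin n → R) →ₗ[R] G //
        Function.Surjective F ∧ LinearMap.ker F = LinearMap.range X.1.mulVecLin}) ≃
    (Σ F : {F : (Fin n → R) →ₗ[R] G // Function.Surjective F},
      {X : Matrix (Fin n) (Fin N) R // LinearMap.range X.mulVecLin = LinearMap.ker F.1}) where
  toFun p := ⟨⟨p.2.1, p.2.2.1⟩, ⟨p.1.1, p.2.2.2.symm⟩⟩
  invFun p := ⟨⟨p.2.1, ⟨surjectionsKerEquiv _ ⟨p.1.1, p.1.2, p.2.2.symm⟩⟩⟩,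
    ⟨p.1.1, p.1.2, p.2.2.symm⟩⟩
  left_inv _ := rfl
  right_inv _ := rfl

/-- For a fixed `X` with cokernel isomorphic to `G`, the admissible `F` are the isomorphisms
`cok X ≃ G`, a torsor under the automorphisms of `G`. -/
lemma card_pairs (n N : ℕ) :
    Nat.card (Σ X : {X : Matrix (Fin n) (Fin N) R //
        Nonempty (((Fin n → R) ⧸ LinearMap.range X.mulVecLin) ≃ₗ[R] G)},
      {F : (Fin n → R) →ₗ[R] G //
        Function.Surjective F ∧ LinearMap.ker F = LinearMap.range X.1.mulVecLin}) =
    Nat.card {X : Matrix (Fin n) (Fin N) R //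
        Nonempty (((Fin n → R) ⧸ LinearMap.range X.mulVecLin) ≃ₗ[R] G)} *
      Nat.card (G ≃ₗ[R] G) := by
  rw [← Nat.card_prod]
  refine Nat.card_congr ((Equiv.sigmaCongrRight fun X => ?_).trans (Equiv.sigmaEquivProd _ _))
  exact (surjectionsKerEquiv _).trans
    { toFun := fun e => X.2.some.symm.trans e
      invFun := fun e => X.2.some.trans e
      left_inv := fun e => by ext x; simp
      right_inv := fun e => by ext x; simp }

end Fibres

/-! ### Reindexing the products -/

section Products

lemma prod_range_eq_prod_Icc_int (q : ℚ) (hq : q ≠ 0) (N d : ℕ) (a : ℤ)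
    (h : a + d = N + 1) :
    ∏ i ∈ Finset.range d, (1 - q ^ i / q ^ N) = ∏ i ∈ Finset.Icc a (N : ℤ), (1 - q ^ (-i)) := by
  refine Finset.prod_bij' (fun i _ => (N : ℤ) - i) (fun j _ => ((N : ℤ) - j).toNat) ?_ ?_ ?_ ?_ ?_
  · intro i hi; simp at hi ⊢; omega
  · intro j hj; simp at hj ⊢; omega
  · intro i hi; simp
  · intro j hj; simp at hj ⊢; omega
  · intro i hi
    rw [neg_sub, zpow_sub₀ hq, zpow_natCast, zpow_natCast]

lemma prod_range_eq_prod_Icc_nat (q : ℚ) (hq : q ≠ 0) (N d : ℕ) (h : d ≤ N) :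
    ∏ i ∈ Finset.range d, (1 - q ^ i / q ^ N) =
      ∏ j ∈ Finset.Icc (N - d + 1) N, (1 - (q ^ j)⁻¹) := by
  refine Finset.prod_bij' (fun i _ => N - i) (fun j _ => N - j) ?_ ?_ ?_ ?_ ?_
  · intro i hi; simp at hi ⊢; omega
  · intro j hj; simp at hj ⊢; omega
  · intro i hi; simp at hi ⊢; omega
  · intro j hj; simp at hj ⊢; omega
  · intro i hi
    have hi' : i ≤ N := (Finset.mem_range.1 hi).le.trans h
    rw [← zpow_natCast q (N - i), Nat.cast_sub hi', ← zpow_neg, neg_sub, zpow_sub₀ hq,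
      zpow_natCast, zpow_natCast]

end Products

/-- Let `(R, m, 𝔽_q)` be a finite commutative local ring with residue
field of `q` elements, `u ≥ 0` and `n ≥ 1` integers, and `G` a finite `R`-module with
Betti numbers `b_i = β_i^R(G)` satisfying `n ≥ b₀ ≥ b₁ − u`. Then the number of
`n × (n+u)` matrices `X` over `R` with `cok(X) ≅ G` equals
`|R|^{n(n+u)} · (1 / (|Aut_R(G)| · |G|^u)) · ∏_{i=u+b₀−b₁+1}^{n+u} (1 − q^{−i}) ·
∏_{j=n−b₀+1}^{n} (1 − q^{−j})`. -/
theorem stmt_13 (R : Type*) [CommRing R] [IsLocalRing R] [Finite R]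
    (G : Type*) [AddCommGroup G] [Module R G] [Finite G]
    (n u : ℕ) (hn : 1 ≤ n) (hb0 : minGens R G ≤ n)
    (hb1 : beta1 R G ≤ minGens R G + u) :
    (Nat.card {X : Matrix (Fin n) (Fin (n + u)) R //
        Nonempty (((Fin n → R) ⧸ LinearMap.range X.mulVecLin) ≃ₗ[R] G)} : ℚ) =
      (Nat.card R : ℚ) ^ (n * (n + u)) *
        (1 / ((Nat.card (G ≃ₗ[R] G) : ℚ) * (Nat.card G : ℚ) ^ u)) *
        (∏ i ∈ Finset.Icc
            ((u : ℤ) + (minGens R G : ℤ) - (beta1 R G : ℤ) + 1) ((n : ℤ) + (u : ℤ)),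
          (1 - (Nat.card (IsLocalRing.ResidueField R) : ℚ) ^ (-i))) *
        (∏ j ∈ Finset.Icc (n - minGens R G + 1) n,
          (1 - ((Nat.card (IsLocalRing.ResidueField R) : ℚ) ^ j)⁻¹)) := by
  set q := Nat.card (IsLocalRing.ResidueField R) with hq
  have hκ : Finite (IsLocalRing.ResidueField R) :=
    Finite.of_surjective _ IsLocalRing.residue_surjective
  have hq0 : (q : ℚ) ≠ 0 := by exact_mod_cast Nat.card_pos.ne'
  have hG0 : (Nat.card G : ℚ) ≠ 0 := by exact_mod_cast Nat.card_pos.ne'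
  have hAutFin : Finite (G ≃ₗ[R] G) := DFunLike.finite _
  have hA0 : (Nat.card (G ≃ₗ[R] G) : ℚ) ≠ 0 := by exact_mod_cast Nat.card_pos.ne'
  have hLin : Finite ((Fin n → R) →ₗ[R] G) := DFunLike.finite _
  have : Fintype {F : (Fin n → R) →ₗ[R] G // Function.Surjective F} := Fintype.ofFinite _
  -- `d` is the number of generators of the kernel of any surjection `R^n → G`
  obtain ⟨d, hd⟩ : ∃ d : ℕ, d + minGens R G = beta1 R G + n :=
    ⟨beta1 R G + n - minGens R G, by omega⟩
  have hdN : d ≤ n + u := by omega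
  set P := ∏ i ∈ Finset.range d, (1 - (q : ℚ) ^ i / (q : ℚ) ^ (n + u)) with hP
  set Q := ∏ i ∈ Finset.range (minGens R G), (1 - (q : ℚ) ^ i / (q : ℚ) ^ n) with hQ
  have hSur : (Nat.card {F : (Fin n → R) →ₗ[R] G // Function.Surjective F} : ℚ) =
      (Nat.card G : ℚ) ^ n * Q := by
    rw [Nat.card_congr (surjectionsEquiv n), card_generating G n hb0]
  have hFib : ∀ F : {F : (Fin n → R) →ₗ[R] G // Function.Surjective F},
      (Nat.card {X : Matrix (Fin n) (Fin (n + u)) R //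
        LinearMap.range X.mulVecLin = LinearMap.ker F.1} : ℚ) =
      ((Nat.card R : ℚ) ^ n / Nat.card G) ^ (n + u) * P := by
    intro F
    have hk : minGens R (LinearMap.ker F.1) = d := by
      have := minGens_ker F.1 F.2
      omega
    have hc : (Nat.card (LinearMap.ker F.1) : ℚ) = (Nat.card R : ℚ) ^ n / Nat.card G := by
      rw [eq_div_iff hG0]
      have h1 := Submodule.card_eq_card_quotient_mul_card (LinearMap.ker F.1)
      rw [Nat.card_congr (F.1.quotKerEquivOfSurjective F.2).toEquiv, Nat.card_pi] at h1
      simp only [Finset.prod_const, Finset.card_univ, Fintype.card_fin] at h1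
      exact_mod_cast h1.symm
    rw [Nat.card_congr (matrixRangeEquiv n (n + u) _),
      card_generating _ _ (by rw [hk]; exact hdN), hk, hc]
  -- Counting the pairs `(X, F)` by `F` instead of by `X` gives the identity to be solved.
  have hcount := card_pairs (R := R) (G := G) n (n + u)
  rw [Nat.card_congr (pairsEquiv n (n + u)), Nat.card_sigma] at hcount
  have hcount' := congrArg (Nat.cast : ℕ → ℚ) hcount
  rw [Nat.cast_sum, Finset.sum_congr rfl (fun F _ => hFib F), Finset.sum_const,
    Finset.card_univ, ← Nat.card_eq_fintype_card, nsmul_eq_mul, hSur, Nat.cast_mul] at hcount'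
  have hPI := prod_range_eq_prod_Icc_int (q : ℚ) hq0 (n + u) d
    ((u : ℤ) + (minGens R G : ℤ) - (beta1 R G : ℤ) + 1) (by push_cast; omega)
  rw [Nat.cast_add] at hPI
  rw [← hPI, ← prod_range_eq_prod_Icc_nat (q : ℚ) hq0 n (minGens R G) hb0, ← hP, ← hQ]
  apply mul_right_cancel₀ hA0
  rw [← hcount', div_pow, ← pow_mul, pow_add (Nat.card G : ℚ)]
  field_simp
end

section
/- Let p be a prime, n ≥ 1, P(t) ∈ ℤ_p[t] monic of degree d ≥ 2, R = ℤ_p[t]/(P(t)), and pY₂, …, pY_{d−1} ∈ p·M_n(ℤ_p). Then there exists a Haar measure-preserving bijection Φ : M_n(ℤ_p) → M_n(ℤ_p) such that whenever X' = Φ(X), we have X ≡ X' (mod p) and there exists U ∈ GL_n(R) with (X + t̄ I_n + t̄² p Y₂ + … + t̄^{d−1} p Y_{d−1}) · U = X' + t̄ I_n in M_n(R), where t̄ is the image of t in R. -/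
/-!
Write `A = X + t + p B` with `B = ∑ t ^ j Y_j`. Looking for `U = 1 + p V` and `X' = X + p Z`, it
suffices to solve `A V + B = Z` with `Z` free of `t`. Let `s` be the shift `t ^ i ↦ t ^ (i - 1)`
(killing the constant coefficient) on the power basis of `R`, extended entrywise to matrices, so
that `W = W₀ + t · s W`. Taking `V = -s W` and `Z = W₀`, the equation becomes `E_X W = B` with
`E_X = 1 + (X + p B) s`. Since `X` has constant entries, `X s` is nilpotent, so `E_X` is unipotent
modulo `p` and hence invertible over `ℤ_[p]` (`isUnit_one_add_p_smul`); the same lemma makes `U`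
invertible. This is `exists_normal_form`.

Because `E_X⁻¹` is `ℤ_[p]`-linear, `X₁ ≡ X₂` modulo `p ^ k` implies `Z X₁ ≡ Z X₂` modulo `p ^ k`.
Thus `Φ X = X + p Z X` perturbs the identity by a contraction of an ultrametric group: it is a
surjective isometry (`isometry_surjective_add`), and such a map permutes the cosets of
`p ^ k M_n(ℤ_p)`, so it preserves Haar measure (`measurePreserving_of_isometry`).
-/

open MeasureTheory

/-! ### Isometries of compact ultrametric groups -/

/-- Closed balls form a π-system generating the Borel σ-algebra, since two balls are nested or
disjoint, and the preimage of a ball under a surjective isometry is a translate of that ball. -/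
theorem measurePreserving_of_isometry {G : Type*} [NormedAddCommGroup G] [IsUltrametricDist G]
    [CompactSpace G] [MeasurableSpace G] [BorelSpace G] (Φ : G → G) (hi : Isometry Φ)
    (hs : Function.Surjective Φ) (μ : Measure G) [μ.IsAddHaarMeasure] : MeasurePreserving Φ μ μ := by
  refine ⟨hi.continuous.measurable, ?_⟩
  have hm := hi.continuous.measurable
  let C : Set (Set G) := {s | ∃ x r, 0 < r ∧ s = Metric.closedBall x r}
  have hC : TopologicalSpace.IsTopologicalBasis C := by
    refine TopologicalSpace.isTopologicalBasis_of_isOpen_of_nhds ?_ ?_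
    · rintro _ ⟨x, r, hr, rfl⟩
      exact IsUltrametricDist.isOpen_closedBall x hr.ne'
    · intro a u ha hu
      obtain ⟨ε, hε, h⟩ := Metric.nhds_basis_closedBall.mem_iff.1 (hu.mem_nhds ha)
      exact ⟨_, ⟨a, ε, hε, rfl⟩, Metric.mem_closedBall_self hε.le, h⟩
  refine ext_of_generate_finite C (BorelSpace.measurable_eq.trans hC.borel_eq_generateFrom) ?_ ?_ ?_
  · rintro _ ⟨x, r, hr, rfl⟩ _ ⟨y, s, hs, rfl⟩ hne
    rcases IsUltrametricDist.closedBall_subset_trichotomy (x := x) (y := y) (r := r) (s := s) with h | h | h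
    · rw [Set.inter_eq_left.2 h]; exact ⟨x, r, hr, rfl⟩
    · rw [Set.inter_eq_right.2 h]; exact ⟨y, s, hs, rfl⟩
    · exact absurd h (Set.not_disjoint_iff_nonempty_inter.2 hne)
  · rintro _ ⟨x, r, hr, rfl⟩
    obtain ⟨z, rfl⟩ := hs x
    have key (y : G) : μ (Metric.closedBall y r) = μ (Metric.closedBall 0 r) := by
      rw [← measure_preimage_add μ (-y) (Metric.closedBall 0 r)]
      congr 1
      ext w
      simp [dist_eq_norm, neg_add_eq_sub]
    rw [Measure.map_apply hm Metric.isClosed_closedBall.measurableSet, hi.preimage_closedBall, key z,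
      key (Φ z)]
  · rw [Measure.map_apply hm MeasurableSet.univ, Set.preimage_univ]

/-- In an ultrametric group a perturbation of the identity by a contraction `F` is an isometry, as
`F x - F y` is dominated by `x - y`; the equation `x + F x = y` is solved by the fixed point of
`x ↦ y - F x`. -/
theorem isometry_surjective_add {G : Type*} [NormedAddCommGroup G] [IsUltrametricDist G] [CompleteSpace G]
    (F : G → G) (K : NNReal) (hK : K < 1) (hF : LipschitzWith K F) :
    Isometry (fun x => x + F x) ∧ Function.Surjective (fun x => x + F x) := by
  constructor
  · refine Isometry.of_dist_eq fun x y => ?_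
    rcases eq_or_ne x y with rfl | hxy
    · simp
    have h1 : ‖F x - F y‖ < ‖x - y‖ := by
      have := hF.dist_le_mul x y
      rw [dist_eq_norm, dist_eq_norm] at this
      refine this.trans_lt (mul_lt_of_lt_one_left (norm_pos_iff.2 (sub_ne_zero.2 hxy)) hK)
    rw [dist_eq_norm, dist_eq_norm, add_sub_add_comm,
      IsUltrametricDist.norm_add_eq_max_of_norm_ne_norm h1.ne', max_eq_left h1.le]
  · intro y
    have hc : ContractingWith K (fun x => y - F x) := by
      refine ⟨hK, LipschitzWith.of_dist_le_mul fun a b => ?_⟩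
      rw [dist_sub_left]
      exact hF.dist_le_mul a b
    exact ⟨_, eq_sub_iff_add_eq.1 hc.fixedPoint_isFixedPt.symm⟩

/-! ### Linear algebra over `ℤ_[p]` -/

/-- By Nakayama `1 + p S` is surjective, and a surjective endomorphism of a finite module is
bijective. -/
theorem isUnit_one_add_p_smul (p : ℕ) [Fact p.Prime] {M : Type*} [AddCommGroup M] [Module ℤ_[p] M]
    [Module.Finite ℤ_[p] M] (S : Module.End ℤ_[p] M) : IsUnit (1 + (p : ℤ_[p]) • S) := by
  rw [Module.End.isUnit_iff]
  apply OrzechProperty.bijective_of_surjective_endomorphism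
  rw [← LinearMap.range_eq_top, ← top_le_iff]
  refine Submodule.le_of_le_smul_of_le_jacobson_bot (I := IsLocalRing.maximalIdeal ℤ_[p]) Module.Finite.fg_top
    (IsLocalRing.jacobson_eq_maximalIdeal ⊥ bot_ne_top).ge ?_
  intro x _
  have : x = (1 + (p : ℤ_[p]) • S) x + (p : ℤ_[p]) • (- S x) := by simp
  rw [this]
  refine Submodule.add_mem_sup ⟨_, rfl⟩ (Submodule.smul_mem_smul ?_ trivial)
  rw [PadicInt.maximalIdeal_eq_span_p]
  exact Ideal.mem_span_singleton_self _

/-- Division with remainder by `t` on the basis `1, t, …, t ^ (d - 1)`: `c` is the constant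
coefficient and `s` is the shift `t ^ i ↦ t ^ (i - 1)`, `1 ↦ 0`. -/
theorem exists_shift (p : ℕ) [Fact p.Prime] {R : Type*} [CommRing R] [Algebra ℤ_[p] R] (t : R) (d : ℕ)
    (b : Module.Basis (Fin d) ℤ_[p] R) (hb : ∀ i, b i = t ^ (i : ℕ)) :
    ∃ (c : R →ₗ[ℤ_[p]] ℤ_[p]) (s : Module.End ℤ_[p] R), IsNilpotent s ∧
      ∀ x, x = algebraMap ℤ_[p] R (c x) + t * s x := by
  let c : R →ₗ[ℤ_[p]] ℤ_[p] := b.constr ℤ_[p] fun i => if (i : ℕ) = 0 then 1 else 0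
  let s : Module.End ℤ_[p] R := b.constr ℤ_[p] fun i => if (i : ℕ) = 0 then 0 else t ^ ((i : ℕ) - 1)
  have hs (i) : s (b i) = if (i : ℕ) = 0 then 0 else t ^ ((i : ℕ) - 1) := b.constr_basis ..
  have hc (i) : c (b i) = if (i : ℕ) = 0 then 1 else 0 := b.constr_basis ..
  refine ⟨c, s, ⟨d, ?_⟩, fun x => ?_⟩
  · have (k : ℕ) : ∀ i : Fin d, (i : ℕ) < k → (s ^ k) (b i) = 0 := by
      induction k with
      | zero => simp
      | succ k ih =>
        intro i hi
        rw [pow_succ, Module.End.mul_apply, hs]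
        split_ifs with h0
        · simp
        · have := ih ⟨i - 1, by lia⟩ (by simp; lia)
          rwa [hb] at this
    exact b.ext fun i => this d i i.2
  · have : LinearMap.id = (Algebra.linearMap ℤ_[p] R).comp c + (LinearMap.mulLeft ℤ_[p] t).comp s := by
      refine b.ext fun i => ?_
      simp only [LinearMap.id_apply, LinearMap.add_apply, LinearMap.comp_apply, hs, hc, Algebra.linearMap_apply, LinearMap.mulLeft_apply]
      rw [hb]
      split_ifs with h
      · simp [h]
      · simp [← pow_succ', Nat.sub_add_cancel (Nat.one_le_iff_ne_zero.2 h)]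
    simpa using LinearMap.congr_fun this x

/-- For `A = X + t + p B`, the equation `A (1 + p V) = (X + p Z) + t` follows from `A V + B = Z`.
With `V = -s W` and `Z = c W` the constant coefficient of `W`, this becomes
`W + (X + p B) s W = B`, which has a unique solution `W`. The last claim says that `Z` is
1-Lipschitz for the `p`-adic metric. -/
theorem exists_normal_form (p : ℕ) [Fact p.Prime] {R : Type*} [CommRing R] [Algebra ℤ_[p] R] (t : R) (d : ℕ)
    (b : Module.Basis (Fin d) ℤ_[p] R) (hb : ∀ i, b i = t ^ (i : ℕ)) (n : ℕ)
    (B : Matrix (Fin n) (Fin n) R) :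
    ∃ Z : Matrix (Fin n) (Fin n) ℤ_[p] → Matrix (Fin n) (Fin n) ℤ_[p],
      (∀ X, ∃ U : Matrix.GeneralLinearGroup (Fin n) R,
        (X.map (algebraMap ℤ_[p] R) + t • (1 : Matrix (Fin n) (Fin n) R) + (p : ℤ_[p]) • B) *
          (U : Matrix (Fin n) (Fin n) R) =
        (X + (p : ℤ_[p]) • Z X).map (algebraMap ℤ_[p] R) + t • (1 : Matrix (Fin n) (Fin n) R)) ∧
      ∀ (X₁ X₂ : Matrix (Fin n) (Fin n) ℤ_[p]) (k : ℕ),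
        (∃ D, X₁ - X₂ = (p : ℤ_[p]) ^ k • D) → ∃ D, Z X₁ - Z X₂ = (p : ℤ_[p]) ^ k • D := by
  classical
  obtain ⟨c, s, ⟨m, hm⟩, hcs⟩ := exists_shift p t d b hb
  have : Module.Finite ℤ_[p] R := Module.Finite.of_basis b
  have : Module.Finite ℤ_[p] (Matrix (Fin n) (Fin n) R) :=
    inferInstanceAs (Module.Finite ℤ_[p] (Fin n → Fin n → R))
  let ι : Matrix (Fin n) (Fin n) ℤ_[p] →ₗ[ℤ_[p]] Matrix (Fin n) (Fin n) R :=
    (Algebra.linearMap ℤ_[p] R).mapMatrix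
  have hι (X) : X.map (algebraMap ℤ_[p] R) = ι X := rfl
  let c' : Matrix (Fin n) (Fin n) R →ₗ[ℤ_[p]] Matrix (Fin n) (Fin n) ℤ_[p] := c.mapMatrix
  let s' : Module.End ℤ_[p] (Matrix (Fin n) (Fin n) R) := s.mapMatrix
  have hcs' (W) : W = ι (c' W) + t • s' W := by
    ext i j
    exact hcs (W i j)
  let l := LinearMap.mulLeft ℤ_[p] (A := Matrix (Fin n) (Fin n) R)
  -- Left multiplication by a matrix with entries in `ℤ_[p]` commutes with the entrywise shift.
  have hnil (X) : IsNilpotent (l (ι X) * s') := by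
    refine Commute.isNilpotent_mul_left ?_ ⟨m, ?_⟩
    · ext W i j
      simp [l, ι, s', Matrix.mul_apply, ← Algebra.smul_def]
    · have hk (k : ℕ) (W) (i j) : (s' ^ k) W i j = (s ^ k) (W i j) := by
        induction k generalizing W with
        | zero => rfl
        | succ k ih => simp only [pow_succ, Module.End.mul_apply, ih]; rfl
      ext W i j
      simp [hk, hm]
  let E (X) : Module.End ℤ_[p] (Matrix (Fin n) (Fin n) R) :=
    1 + l (ι X) * s' + (p : ℤ_[p]) • (l B * s')
  have hE (X) : IsUnit (E X) := by
    obtain ⟨u, hu⟩ := (hnil X).isUnit_one_add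
    -- Factor out the unipotent part `u` of `E X`; the rest is `1` modulo `p`.
    have : E X = u * (1 + (p : ℤ_[p]) • (↑u⁻¹ * (l B * s'))) := by
      rw [mul_add, mul_one, mul_smul_comm, Units.mul_inv_cancel_left, hu]
    rw [this]
    exact u.isUnit.mul (isUnit_one_add_p_smul p _)
  have hEb (X) := (Module.End.isUnit_iff _).1 (hE X)
  choose W hW using fun X => (hEb X).2 B
  have hE' (X V) : E X V = V + ι X * s' V + (p : ℤ_[p]) • (B * s' V) := rfl
  refine ⟨fun X => c' (W X), fun X => ?_, ?_⟩
  · have hU : IsUnit (1 - (p : ℤ_[p]) • s' (W X)) := by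
      obtain ⟨V, hV⟩ := ((Module.End.isUnit_iff _).1 (isUnit_one_add_p_smul p (-l (s' (W X))))).2 1
      refine IsUnit.of_mul_eq_one V ?_
      simpa [l, sub_eq_add_neg, add_mul] using hV
    obtain ⟨U, hU⟩ := hU
    refine ⟨U, ?_⟩
    rw [hU, hι, hι, map_add, map_smul]
    have h1 := hW X
    rw [hE'] at h1
    have h2 := hcs' (W X)
    have h3 : ι (c' (W X)) = B - (ι X * s' (W X) + t • s' (W X) + (p : ℤ_[p]) • (B * s' (W X))) := by
      rw [eq_sub_of_add_eq h2.symm]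
      generalize s' (W X) = S at h1 ⊢
      rw [eq_sub_of_add_eq (eq_sub_of_add_eq h1)]
      abel
    rw [h3]
    simp only [mul_sub, add_mul, mul_one, mul_smul_comm, smul_mul_assoc, one_mul, smul_sub, smul_add]
    abel
  · rintro X₁ X₂ k ⟨D, hD⟩
    obtain ⟨V, hV⟩ := (hEb X₁).2 (-(ι D * s' (W X₂)))
    refine ⟨c' V, ?_⟩
    -- `E X₁ (W X₁ - W X₂) = B - E X₁ (W X₂) = (X₂ - X₁) s (W X₂)`, which is divisible by `p ^ k`.
    have : W X₁ - W X₂ = (p : ℤ_[p]) ^ k • V := by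
      apply (hEb X₁).1
      rw [map_sub, map_smul, hV, hW]
      nth_rw 1 [← hW X₂]
      have : ι X₁ = ι X₂ + (p : ℤ_[p]) ^ k • ι D := by
        rw [← map_smul, ← map_add, ← hD]; congr 1; abel
      rw [hE', hE', this, add_mul, smul_mul_assoc, smul_neg]
      abel
    simp only [← map_sub, this, map_smul]

/-! ### The entrywise sup norm on `p`-adic matrices -/

section
attribute [local instance] Matrix.normedAddCommGroup

/-- Comparison of sup norms through divisibility by powers of `p`. -/
theorem norm_le_of_forall_pow_dvd (p : ℕ) [Fact p.Prime] (n : ℕ) (x y : Matrix (Fin n) (Fin n) ℤ_[p])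
    (h : ∀ k : ℕ, (∃ D, x = (p : ℤ_[p]) ^ k • D) → ∃ D, y = (p : ℤ_[p]) ^ k • D) : ‖y‖ ≤ ‖x‖ := by
  rw [Matrix.norm_le_iff (norm_nonneg _)]
  intro i j
  by_contra! hlt
  have h0 : y i j ≠ 0 := norm_pos_iff.1 ((norm_nonneg _).trans_lt hlt)
  set v := (y i j).valuation with hv
  have hx (a b) : (p : ℤ_[p]) ^ (v + 1) ∣ x a b := by
    rw [← Ideal.mem_span_singleton, ← PadicInt.norm_le_pow_iff_mem_span_pow]
    have := ((Matrix.norm_entry_le_entrywise_sup_norm x (i := a) (j := b))).trans_lt hlt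
    rw [PadicInt.norm_eq_zpow_neg_valuation h0, PadicInt.norm_lt_pow_iff_norm_le_pow_sub_one] at this
    convert this using 2
    push_cast
    ring
  choose D hD using hx
  obtain ⟨D', hD'⟩ := h (v + 1) ⟨Matrix.of D, by ext a b : 2; exact hD a b⟩
  have : y i j ∈ Ideal.span {(p : ℤ_[p]) ^ (v + 1)} := by
    rw [hD']; exact Ideal.mem_span_singleton.2 ⟨D' i j, rfl⟩
  rw [← PadicInt.norm_le_pow_iff_mem_span_pow, PadicInt.norm_eq_zpow_neg_valuation h0] at this
  have hp : (1 : ℝ) < p := by exact_mod_cast (Fact.out : p.Prime).one_lt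
  rw [zpow_le_zpow_iff_right₀ hp] at this
  push_cast at this
  lia

theorem matrix_isUltrametricDist (p : ℕ) [Fact p.Prime] (n : ℕ) : IsUltrametricDist (Matrix (Fin n) (Fin n) ℤ_[p]) :=
  inferInstanceAs (IsUltrametricDist (Fin n → Fin n → ℤ_[p]))

/-- `p Z` is Lipschitz with constant `p⁻¹ < 1` for the sup norm, so the two results on ultrametric
groups apply. -/
theorem bijective_measurePreserving_add_p_smul (p : ℕ) [Fact p.Prime] (n : ℕ)
    (Z : Matrix (Fin n) (Fin n) ℤ_[p] → Matrix (Fin n) (Fin n) ℤ_[p])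
    (hZ : ∀ (X₁ X₂ : Matrix (Fin n) (Fin n) ℤ_[p]) (k : ℕ),
        (∃ D, X₁ - X₂ = (p : ℤ_[p]) ^ k • D) → ∃ D, Z X₁ - Z X₂ = (p : ℤ_[p]) ^ k • D)
    [MeasurableSpace (Matrix (Fin n) (Fin n) ℤ_[p])]
    [BorelSpace (Matrix (Fin n) (Fin n) ℤ_[p])] :
    Function.Bijective (fun X => X + (p : ℤ_[p]) • Z X) ∧
    ∀ μ : Measure (Matrix (Fin n) (Fin n) ℤ_[p]), μ.IsAddHaarMeasure →
      MeasurePreserving (fun X => X + (p : ℤ_[p]) • Z X) μ μ := by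
  have hp : (1 : ℝ) < p := by exact_mod_cast (Fact.out : p.Prime).one_lt
  have := matrix_isUltrametricDist p n
  -- The uniform structure and topology of the sup norm agree with the entrywise ones only up to
  -- unfolding, so the instances are restated for the norm.
  have : @CompactSpace (Matrix (Fin n) (Fin n) ℤ_[p])
      PseudoMetricSpace.toUniformSpace.toTopologicalSpace :=
    inferInstanceAs (CompactSpace (Fin n → Fin n → ℤ_[p]))
  have : @BorelSpace (Matrix (Fin n) (Fin n) ℤ_[p])
      PseudoMetricSpace.toUniformSpace.toTopologicalSpace _ := ‹BorelSpace _›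
  have : @CompleteSpace (Matrix (Fin n) (Fin n) ℤ_[p]) PseudoMetricSpace.toUniformSpace :=
    inferInstanceAs (CompleteSpace (Fin n → Fin n → ℤ_[p]))
  have hL : LipschitzWith (p : NNReal)⁻¹ (fun X => (p : ℤ_[p]) • Z X) := by
    refine LipschitzWith.of_dist_le_mul fun a b => ?_
    rw [dist_eq_norm, dist_eq_norm, ← smul_sub]
    have h := norm_le_of_forall_pow_dvd p n _ _ (hZ a b)
    rw [Matrix.norm_le_iff (by positivity)]
    intro i j
    rw [Matrix.smul_apply, smul_eq_mul, norm_mul, PadicInt.norm_p]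
    push_cast
    gcongr
    exact (Matrix.norm_entry_le_entrywise_sup_norm _).trans h
  obtain ⟨h1, h2⟩ := isometry_surjective_add _ _ (inv_lt_one_of_one_lt₀ (by exact_mod_cast hp)) hL
  refine ⟨⟨h1.injective, h2⟩, fun μ hμ => ?_⟩
  exact @measurePreserving_of_isometry _ _ _ _ _ _ _ h1 h2 μ hμ
end

/-! ### The normal form over `ℤ_[p][t] / (P)` -/

/-- Let `p` be a prime, `n ≥ 1`, `P(t) ∈ ℤ_p[t]` monic of degree
`d ≥ 2`, `R = ℤ_p[t]/(P(t))`, and `pY₂, …, pY_{d−1} ∈ p·M_n(ℤ_p)`. Then there exists a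
Haar measure-preserving bijection `Φ : M_n(ℤ_p) → M_n(ℤ_p)` such that whenever
`X' = Φ(X)`, we have `X ≡ X' (mod p)` and there exists `U ∈ GL_n(R)` with
`(X + t̄ I_n + t̄² p Y₂ + … + t̄^{d−1} p Y_{d−1}) · U = X' + t̄ I_n` in `M_n(R)`,
where `t̄` is the image of `t` in `R`. ("Haar measure-preserving" is stated as
preserving every additive Haar measure on `M_n(ℤ_p)` for its Borel σ-algebra.) -/
theorem stmt_19 (p : ℕ) [Fact p.Prime] (n : ℕ) (hn : 1 ≤ n)
    (P : Polynomial ℤ_[p]) (hP : P.Monic) (hd : 2 ≤ P.natDegree)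
    (Y : ℕ → Matrix (Fin n) (Fin n) ℤ_[p])
    [MeasurableSpace (Matrix (Fin n) (Fin n) ℤ_[p])]
    [BorelSpace (Matrix (Fin n) (Fin n) ℤ_[p])] :
    ∃ Φ : Matrix (Fin n) (Fin n) ℤ_[p] → Matrix (Fin n) (Fin n) ℤ_[p],
      Function.Bijective Φ ∧
      (∀ μ : MeasureTheory.Measure (Matrix (Fin n) (Fin n) ℤ_[p]),
        μ.IsAddHaarMeasure → MeasureTheory.MeasurePreserving Φ μ μ) ∧
      ∀ X : Matrix (Fin n) (Fin n) ℤ_[p],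
        (∀ i j, (p : ℤ_[p]) ∣ (Φ X - X) i j) ∧
        ∃ U : Matrix.GeneralLinearGroup (Fin n) (Polynomial ℤ_[p] ⧸ Ideal.span {P}),
          (X.map (fun a => Ideal.Quotient.mk (Ideal.span {P}) (Polynomial.C a)) +
              (Ideal.Quotient.mk (Ideal.span {P}) Polynomial.X) •
                (1 : Matrix (Fin n) (Fin n) (Polynomial ℤ_[p] ⧸ Ideal.span {P})) +
              ∑ j ∈ Finset.Icc 2 (P.natDegree - 1),
                (Ideal.Quotient.mk (Ideal.span {P}) Polynomial.X) ^ j •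
                  (((p : ℤ_[p]) • Y j).map
                    (fun a => Ideal.Quotient.mk (Ideal.span {P}) (Polynomial.C a)))) *
            (U : Matrix (Fin n) (Fin n) (Polynomial ℤ_[p] ⧸ Ideal.span {P})) =
          (Φ X).map (fun a => Ideal.Quotient.mk (Ideal.span {P}) (Polynomial.C a)) +
            (Ideal.Quotient.mk (Ideal.span {P}) Polynomial.X) •
              (1 : Matrix (Fin n) (Fin n) (Polynomial ℤ_[p] ⧸ Ideal.span {P})) := by
  have hA : ∀ a, Ideal.Quotient.mk (Ideal.span {P}) (Polynomial.C a) =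
      algebraMap ℤ_[p] (Polynomial ℤ_[p] ⧸ Ideal.span {P}) a := fun _ => rfl
  let pb : PowerBasis ℤ_[p] (AdjoinRoot P) := AdjoinRoot.powerBasis' hP
  let b : Module.Basis (Fin pb.dim) ℤ_[p] (Polynomial ℤ_[p] ⧸ Ideal.span {P}) := pb.basis
  obtain ⟨Z, hU, hZ⟩ := exists_normal_form p (Ideal.Quotient.mk (Ideal.span {P}) Polynomial.X) pb.dim b
    pb.basis_eq_pow n (∑ j ∈ Finset.Icc 2 (P.natDegree - 1),
      (Ideal.Quotient.mk (Ideal.span {P}) Polynomial.X) ^ j •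
        (Y j).map (algebraMap ℤ_[p] (Polynomial ℤ_[p] ⧸ Ideal.span {P})))
  obtain ⟨h1, h2⟩ := bijective_measurePreserving_add_p_smul p n Z hZ
  refine ⟨_, h1, h2, fun X => ⟨fun i j => ?_, ?_⟩⟩
  · simp
  · obtain ⟨U, hU⟩ := hU X
    refine ⟨U, ?_⟩
    simp only [hA]
    rw [← hU, Finset.smul_sum]
    congr 2
    refine Finset.sum_congr rfl fun j _ => ?_
    rw [smul_comm]
    congr 1
    ext a b
    exact (Algebra.linearMap ℤ_[p] (Polynomial ℤ_[p] ⧸ Ideal.span {P})).map_smul _ _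
end
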